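/- For every n ≥ 3, the following identity of polynomials in t holds: D_n^1(t) = [2(n-1)t - 1]·D_{n-1}^1(t) + 2t(1-t)·(D_{n-1}^1)'(t) + D_{n-1}^{0,1}(t) + t·D_{n-1}^{≥2}(t) + D_{n-1}^{0,≥2}(t), where ′ denotes the formal derivative of polynomials. -/

import Mathlib

/-- A signed permutation of `{1,…,n}`, encoded as an (unsigned) permutation of
`Fin n` together with a choice of sign for each position.  The associated
word is `π_1 π_2 ⋯ π_n` where `π_j = ± σ(j)`. -/
abbrev SignedPerm (n : ℕ) := Equiv.Perm (Fin n) × (Fin n → Bool)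

namespace SignedPerm

/-- The letter `π_j` of the word of `p`, for `1 ≤ j ≤ n` (and `0` otherwise). -/
def word {n : ℕ} (p : SignedPerm n) (j : ℕ) : ℤ :=
  if h : 1 ≤ j ∧ j ≤ n then
    (if p.2 ⟨j - 1, by omega⟩ then -1 else 1) * ((p.1 ⟨j - 1, by omega⟩ : ℕ) + 1)
  else 0

/-- The letter `π_j`, with the type `D` convention `π_0 = -π_2`. -/
def entry {n : ℕ} (p : SignedPerm n) (j : ℕ) : ℤ :=
  if j = 0 then -(p.word 2) else p.word j

/-- The set of `D`-descents of `p`: those `i ∈ {0,…,n-1}` with `π_i > π_{i+1}`. -/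
def ddes {n : ℕ} (p : SignedPerm n) : Finset ℕ :=
  (Finset.range n).filter fun i => p.entry (i + 1) < p.entry i

/-- The number of `D`-descents of `p`. -/
def d {n : ℕ} (p : SignedPerm n) : ℕ := p.ddes.card

/-- Membership in the type `D` Coxeter group `D_n ⊆ B_n`:
the number of negative letters is even. -/
def inD {n : ℕ} (p : SignedPerm n) : Prop :=
  Even (Finset.univ.filter (fun i => p.2 i = true)).card

/-- Type '1': descent at position `1` but not at `0`. -/
def type1 {n : ℕ} (p : SignedPerm n) : Prop := 1 ∈ p.ddes ∧ 0 ∉ p.ddes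

/-- Type '0,1': descents at both positions `0` and `1`. -/
def type01 {n : ℕ} (p : SignedPerm n) : Prop := 0 ∈ p.ddes ∧ 1 ∈ p.ddes

/-- Type '≥2': no descent at positions `0` and `1`. -/
def typeGe2 {n : ℕ} (p : SignedPerm n) : Prop := 0 ∉ p.ddes ∧ 1 ∉ p.ddes

/-- Type '0,≥2': descent at position `0` but not at `1`. -/
def type0Ge2 {n : ℕ} (p : SignedPerm n) : Prop := 0 ∈ p.ddes ∧ 1 ∉ p.ddes

instance {n : ℕ} (p : SignedPerm n) : Decidable p.inD := by
  unfold SignedPerm.inD; infer_instance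
instance {n : ℕ} (p : SignedPerm n) : Decidable p.type1 := by
  unfold SignedPerm.type1; infer_instance
instance {n : ℕ} (p : SignedPerm n) : Decidable p.type01 := by
  unfold SignedPerm.type01; infer_instance
instance {n : ℕ} (p : SignedPerm n) : Decidable p.typeGe2 := by
  unfold SignedPerm.typeGe2; infer_instance
instance {n : ℕ} (p : SignedPerm n) : Decidable p.type0Ge2 := by
  unfold SignedPerm.type0Ge2; infer_instance

end SignedPerm

/-- The type `D` Eulerian number `D_{n,k}`: the number of elements of `D_n`
with exactly `k` `D`-descents (zero for `k < 0`). -/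
def eulerD (n : ℕ) (k : ℤ) : ℕ :=
  (Finset.univ.filter fun p : SignedPerm n => p.inD ∧ (p.d : ℤ) = k).card

/-- The sub-Eulerian number `D_{n,k}^1`. -/
def subEuler1 (n : ℕ) (k : ℤ) : ℕ :=
  (Finset.univ.filter fun p : SignedPerm n => p.inD ∧ p.type1 ∧ (p.d : ℤ) = k).card

/-- The sub-Eulerian number `D_{n,k}^{0,1}`. -/
def subEuler01 (n : ℕ) (k : ℤ) : ℕ :=
  (Finset.univ.filter fun p : SignedPerm n => p.inD ∧ p.type01 ∧ (p.d : ℤ) = k).card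

/-- The sub-Eulerian number `D_{n,k}^{≥2}`. -/
def subEulerGe2 (n : ℕ) (k : ℤ) : ℕ :=
  (Finset.univ.filter fun p : SignedPerm n => p.inD ∧ p.typeGe2 ∧ (p.d : ℤ) = k).card

/-- The sub-Eulerian number `D_{n,k}^{0,≥2}`. -/
def subEuler0Ge2 (n : ℕ) (k : ℤ) : ℕ :=
  (Finset.univ.filter fun p : SignedPerm n => p.inD ∧ p.type0Ge2 ∧ (p.d : ℤ) = k).card

/-- The type `D` Eulerian polynomial `D_n(t) = Σ_{π ∈ D_n} t^{d(π)}`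
(with `D_0(t) = D_1(t) = 1`). -/
noncomputable def polyD (n : ℕ) : Polynomial ℚ :=
  ∑ p ∈ Finset.univ.filter (fun p : SignedPerm n => p.inD), Polynomial.X ^ p.d

/-- The sub-Eulerian polynomial `D_n^1(t)`. -/
noncomputable def polyD1 (n : ℕ) : Polynomial ℚ :=
  ∑ p ∈ Finset.univ.filter (fun p : SignedPerm n => p.inD ∧ p.type1), Polynomial.X ^ p.d

/-- The sub-Eulerian polynomial `D_n^{0,1}(t)`. -/
noncomputable def polyD01 (n : ℕ) : Polynomial ℚ :=
  ∑ p ∈ Finset.univ.filter (fun p : SignedPerm n => p.inD ∧ p.type01), Polynomial.X ^ p.d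

/-- The sub-Eulerian polynomial `D_n^{≥2}(t)`. -/
noncomputable def polyDGe2 (n : ℕ) : Polynomial ℚ :=
  ∑ p ∈ Finset.univ.filter (fun p : SignedPerm n => p.inD ∧ p.typeGe2), Polynomial.X ^ p.d

/-- The sub-Eulerian polynomial `D_n^{0,≥2}(t)`. -/
noncomputable def polyD0Ge2 (n : ℕ) : Polynomial ℚ :=
  ∑ p ∈ Finset.univ.filter (fun p : SignedPerm n => p.inD ∧ p.type0Ge2), Polynomial.X ^ p.d

namespace SignedPerm

/-- Indicator of a descent. -/
def dl {n : ℕ} (p : SignedPerm n) (i : ℕ) : ℕ := if p.entry (i + 1) < p.entry i then 1 else 0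

lemma d_eq {n : ℕ} (p : SignedPerm n) : p.d = ∑ i ∈ Finset.range n, p.dl i := by
  unfold d ddes dl
  rw [Finset.card_filter]

lemma mem_ddes {n : ℕ} (p : SignedPerm n) (i : ℕ) : i ∈ p.ddes ↔ i < n ∧ p.dl i = 1 := by
  simp [ddes, dl]

lemma word_of {n : ℕ} (p : SignedPerm n) (i : Fin n) :
    p.word (i + 1) = (if p.2 i then -1 else 1) * (((p.1 i : ℕ) : ℤ) + 1) := by
  have := i.2
  simp [word]

lemma word_abs {n : ℕ} (p : SignedPerm n) (i : Fin n) :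
    |p.word (i + 1)| = ((p.1 i : ℕ) : ℤ) + 1 := by
  rw [word_of, abs_mul]
  have h : |(((p.1 i : ℕ) : ℤ) + 1)| = ((p.1 i : ℕ) : ℤ) + 1 := abs_of_nonneg (by positivity)
  rw [h]; split_ifs <;> simp

lemma word_abs_le {n : ℕ} (p : SignedPerm n) (j : ℕ) : |p.word j| ≤ n := by
  by_cases h : 1 ≤ j ∧ j ≤ n
  · have := word_abs p ⟨j - 1, by omega⟩
    have h2 := (p.1 ⟨j - 1, by omega⟩).2
    rw [show ((⟨j - 1, by omega⟩ : Fin n) : ℕ) + 1 = j from by simp; omega] at this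
    omega
  · simp [word, h]

lemma word_abs_pos {n : ℕ} (p : SignedPerm n) (j : ℕ) (h : 1 ≤ j ∧ j ≤ n) : 1 ≤ |p.word j| := by
  have := word_abs p ⟨j - 1, by omega⟩
  rw [show ((⟨j - 1, by omega⟩ : Fin n) : ℕ) + 1 = j from by simp; omega] at this
  omega

lemma word_abs_ne {n : ℕ} (p : SignedPerm n) (j k : ℕ) (h : 1 ≤ j ∧ j ≤ n) (h' : 1 ≤ k ∧ k ≤ n)
    (hjk : j ≠ k) : |p.word j| ≠ |p.word k| := by
  have h1 := word_abs p ⟨j - 1, by omega⟩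
  rw [show ((⟨j - 1, by omega⟩ : Fin n) : ℕ) + 1 = j from by simp; omega] at h1
  have h2 := word_abs p ⟨k - 1, by omega⟩
  rw [show ((⟨k - 1, by omega⟩ : Fin n) : ℕ) + 1 = k from by simp; omega] at h2
  rw [h1, h2]
  intro h3
  have h4 : p.1 ⟨j - 1, by omega⟩ = p.1 ⟨k - 1, by omega⟩ := by
    apply Fin.ext; omega
  have := p.1.injective h4
  simp at this; omega

/-- flip the sign of the letter of absolute value one -/
def flip {m : ℕ} (p : SignedPerm (m + 1)) : SignedPerm (m + 1) :=
  (p.1, Function.update p.2 (p.1.symm 0) (!(p.2 (p.1.symm 0))))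

lemma flip_flip {m : ℕ} (p : SignedPerm (m + 1)) : p.flip.flip = p := by
  simp [flip]

/-- flip on letters -/
def fl (x : ℤ) : ℤ := if |x| = 1 then -x else x

lemma word_flip {m : ℕ} (p : SignedPerm (m + 1)) (j : ℕ) : p.flip.word j = fl (p.word j) := by
  by_cases h : 1 ≤ j ∧ j ≤ m + 1
  · obtain ⟨i, rfl⟩ : ∃ i : Fin (m + 1), j = i + 1 := ⟨⟨j - 1, by omega⟩, by simp; omega⟩
    rw [fl, word_abs, word_of, word_of]
    by_cases hi : i = p.1.symm 0
    · subst hi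
      cases hb : p.2 (p.1.symm 0) <;> simp [flip, hb]
    · have : (p.1 i : ℕ) ≠ 0 := by
        intro h0
        apply hi
        rw [Equiv.eq_symm_apply]
        exact Fin.ext h0
      have h2 : ¬ (((p.1 i : ℕ) : ℤ) + 1 = 1) := by omega
      rw [if_neg h2]
      simp [flip, hi]
  · simp [word, h, fl]

lemma entry_flip {m : ℕ} (p : SignedPerm (m + 1)) (j : ℕ) : p.flip.entry j = fl (p.entry j) := by
  unfold entry
  split_ifs
  · rw [word_flip]; simp only [fl, abs_neg]; split_ifs <;> rfl
  · exact word_flip p j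

lemma fl_lt (x y : ℤ) (hx : 1 ≤ |x|) (hy : 1 ≤ |y|) (h : |x| ≠ |y|) : fl x < fl y ↔ x < y := by
  unfold fl; grind

lemma dl_flip {m : ℕ} (hm : 1 ≤ m) (p : SignedPerm (m + 1)) (i : ℕ) (hi : i < m + 1) :
    p.flip.dl i = p.dl i := by
  unfold dl
  rw [entry_flip, entry_flip]
  refine if_congr (fl_lt _ _ ?_ ?_ ?_) rfl rfl
  · exact word_abs_pos p _ (by omega)
  · unfold entry; split_ifs
    · rw [abs_neg]; exact word_abs_pos p _ (by omega)
    · exact word_abs_pos p _ (by omega)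
  · unfold entry; rw [if_neg (by omega : ¬ i + 1 = 0)]; split_ifs
    · rw [abs_neg]; exact word_abs_ne p _ _ (by omega) (by omega) (by omega)
    · exact word_abs_ne p _ _ (by omega) (by omega) (by omega)

lemma ddes_flip {m : ℕ} (hm : 1 ≤ m) (p : SignedPerm (m + 1)) : p.flip.ddes = p.ddes := by
  ext i
  rw [mem_ddes, mem_ddes]
  constructor
  · rintro ⟨h, h'⟩; exact ⟨h, by rw [← dl_flip hm p i h]; exact h'⟩
  · rintro ⟨h, h'⟩; exact ⟨h, by rw [dl_flip hm p i h]; exact h'⟩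

lemma inD_flip {m : ℕ} (p : SignedPerm (m + 1)) : p.flip.inD ↔ ¬ p.inD := by
  unfold inD
  have key : ∀ s : Fin (m + 1) → Bool, (Finset.univ.filter (fun i => s i = true)).card
      = ∑ i, (s i).toNat := by
    intro s
    rw [Finset.card_filter]
    apply Finset.sum_congr rfl
    intro i _
    cases s i <;> rfl
  rw [key, key, ← Finset.add_sum_erase _ _ (Finset.mem_univ (p.1.symm 0)),
    ← Finset.add_sum_erase (a := p.1.symm 0) (f := fun i => (p.2 i).toNat) _ (Finset.mem_univ _)]
  have : ∑ x ∈ Finset.univ.erase (p.1.symm 0), (p.flip.2 x).toNat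
      = ∑ x ∈ Finset.univ.erase (p.1.symm 0), (p.2 x).toNat := by
    apply Finset.sum_congr rfl
    intro i hi
    have hi := Finset.ne_of_mem_erase hi
    simp [flip, hi]
  rw [this]
  have h2 : p.flip.2 (p.1.symm 0) = !(p.2 (p.1.symm 0)) := by simp [flip]
  rw [h2]
  cases p.2 (p.1.symm 0) <;> simp [Nat.even_add, Nat.even_add_one]

lemma two_mul_sum {m : ℕ} (hm : 1 ≤ m) (T : Finset ℕ → Prop) [DecidablePred T] :
    2 * (∑ p ∈ Finset.univ.filter (fun p : SignedPerm (m + 1) => p.inD ∧ T p.ddes),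
      (Polynomial.X : Polynomial ℚ) ^ p.d)
      = ∑ p : SignedPerm (m + 1), if T p.ddes then (Polynomial.X : Polynomial ℚ) ^ p.d else 0 := by
  rw [← Finset.sum_filter]
  rw [← Finset.sum_filter_add_sum_filter_not
    (Finset.univ.filter fun p : SignedPerm (m + 1) => T p.ddes) (fun p => p.inD)]
  rw [Finset.filter_filter, Finset.filter_filter, two_mul]
  congr 1
  · apply Finset.sum_congr _ (fun _ _ => rfl)
    ext p; simp [and_comm]
  · apply Finset.sum_bij' (fun p _ => SignedPerm.flip p) (fun p _ => SignedPerm.flip p)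
      (left_neg := fun p _ => flip_flip p) (right_neg := fun p _ => flip_flip p)
    · intro p hp; simp at hp ⊢; rw [inD_flip, ddes_flip hm]; tauto
    · intro p hp; simp at hp ⊢; rw [inD_flip, ddes_flip hm]; tauto
    · intro p _; unfold d; rw [ddes_flip hm]

/-- insertion of `± (m+1)` at position `k`. -/
def ins {m : ℕ} (x : SignedPerm m × Fin (m + 1) × Bool) : SignedPerm (m + 1) :=
  (((finSuccEquiv' x.2.1).trans (Equiv.optionCongr x.1.1)).trans
    (finSuccEquiv' (Fin.last m)).symm, Fin.insertNth x.2.1 x.2.2 x.1.2)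

lemma ins_fst_self {m : ℕ} (p : SignedPerm m) (k : Fin (m + 1)) (b : Bool) :
    (ins (p, k, b)).1 k = Fin.last m := by
  simp [ins]

lemma ins_fst_succAbove {m : ℕ} (p : SignedPerm m) (k : Fin (m + 1)) (b : Bool) (i : Fin m) :
    (ins (p, k, b)).1 (k.succAbove i) = (p.1 i).castSucc := by
  simp [ins]

lemma ins_injective {m : ℕ} : Function.Injective (ins (m := m)) := by
  rintro ⟨p, k, b⟩ ⟨p', k', b'⟩ h
  have hk : k = k' := by
    have h1 := ins_fst_self p k b
    rw [h] at h1
    rw [← ins_fst_self p' k' b'] at h1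
    exact (ins (p', k', b')).1.injective h1
  subst hk
  have hp : p.1 = p'.1 := by
    ext i
    have h1 := ins_fst_succAbove p k b i
    rw [h, ins_fst_succAbove] at h1
    simpa using (congrArg Fin.val h1).symm
  have hs := congrArg Prod.snd h
  simp only [ins] at hs
  have hb : b = b' := by simpa using congrFun hs k
  have hp2 : p.2 = p'.2 := by
    ext i
    have := congrFun hs (k.succAbove i)
    simp at this
    rw [this]
  rw [hb, Prod.ext hp hp2]

lemma ins_bijective {m : ℕ} : Function.Bijective (ins (m := m)) := by
  rw [Fintype.bijective_iff_injective_and_card]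
  refine ⟨ins_injective, ?_⟩
  simp [Fintype.card_perm, Nat.factorial_succ, pow_succ]
  ring

lemma word_ins_self {m : ℕ} (p : SignedPerm m) (k : Fin (m + 1)) (b : Bool) :
    (ins (p, k, b)).word (k + 1) = (if b then -1 else 1) * ((m : ℤ) + 1) := by
  rw [word_of, ins_fst_self]
  simp [ins]

lemma word_ins_lt {m : ℕ} (p : SignedPerm m) (k : Fin (m + 1)) (b : Bool) (j : ℕ) (hj : j ≤ k) :
    (ins (p, k, b)).word j = p.word j := by
  have hk := k.2
  by_cases h : 1 ≤ j
  · obtain ⟨i, rfl⟩ : ∃ i : Fin m, j = i + 1 := ⟨⟨j - 1, by omega⟩, by simp; omega⟩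
    have h1 : k.succAbove i = i.castSucc := Fin.succAbove_of_castSucc_lt _ _ (by
      rw [Fin.lt_def]; simp; omega)
    have h2 : ((i : ℕ) + 1) = ((k.succAbove i : Fin (m + 1)) : ℕ) + 1 := by rw [h1]; simp
    rw [word_of p i, h2, word_of, ins_fst_succAbove]
    simp [ins]
  · simp [word, h]

lemma word_ins_gt {m : ℕ} (p : SignedPerm m) (k : Fin (m + 1)) (b : Bool) (j : ℕ) (hj : k < j)
    (hm : j ≤ m) :
    (ins (p, k, b)).word (j + 1) = p.word j := by
  obtain ⟨i, rfl⟩ : ∃ i : Fin m, j = i + 1 := ⟨⟨j - 1, by omega⟩, by simp; omega⟩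
  have h1 : k.succAbove i = i.succ := Fin.succAbove_of_le_castSucc _ _ (by
    rw [Fin.le_def]; simp; omega)
  have h2 : ((i : ℕ) + 1 + 1) = ((k.succAbove i : Fin (m + 1)) : ℕ) + 1 := by rw [h1]; simp
  rw [word_of p i, h2, word_of, ins_fst_succAbove]
  simp [ins]

lemma sum_gap (f g : ℕ → ℕ) (j r : ℕ) (hjr : j + 1 ≤ r) (h1 : ∀ i < j, g i = f i)
    (h2 : ∀ i, j < i → i < r → g (i + 1) = f i) :
    ∑ i ∈ Finset.range (r + 1), g i + f j
      = ∑ i ∈ Finset.range r, f i + g j + g (j + 1) := by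
  induction r, hjr using Nat.le_induction with
  | base =>
    rw [Finset.sum_range_succ, Finset.sum_range_succ, Finset.sum_range_succ,
      Finset.sum_congr rfl (fun i hi => h1 i (Finset.mem_range.mp hi))]
    ring
  | succ r hr ih =>
    have := ih (fun i hi hi' => h2 i hi (by omega))
    rw [Finset.sum_range_succ, Finset.sum_range_succ f r, h2 r (by omega) (by omega)]
    omega

/-- tail descents -/
def td {n : ℕ} (p : SignedPerm n) (r : ℕ) : ℕ := ∑ i ∈ Finset.range r, p.dl (i + 2)

lemma d_eq_td {r : ℕ} (p : SignedPerm (r + 2)) : p.d = p.dl 0 + p.dl 1 + p.td r := by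
  rw [d_eq, Finset.sum_range_succ', Finset.sum_range_succ', td]; ring

lemma dl_le {n : ℕ} (p : SignedPerm n) (i : ℕ) : p.dl i ≤ 1 := by
  unfold dl; split_ifs <;> simp

lemma dl_succ {n : ℕ} (p : SignedPerm n) (i : ℕ) :
    p.dl (i + 1) = if p.word (i + 2) < p.word (i + 1) then 1 else 0 := by
  simp [dl, entry]

lemma dl_zero {n : ℕ} (p : SignedPerm n) :
    p.dl 0 = if p.word 1 < - p.word 2 then 1 else 0 := by
  simp [dl, entry]

lemma word_bd {n : ℕ} (p : SignedPerm n) (j : ℕ) : -(n : ℤ) ≤ p.word j ∧ p.word j ≤ n :=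
  abs_le.mp (word_abs_le p j)

/-- gap insertion, inner -/
lemma td_ins_inner {r : ℕ} (p : SignedPerm (r + 2)) (j : ℕ) (hj : j < r) (b : Bool) :
    (ins (p, ⟨j + 2, by omega⟩, b)).td (r + 1) + p.dl (j + 2) = p.td r + 1 := by
  have hs := word_ins_self p ⟨j + 2, by omega⟩ b
  have hl := word_ins_lt p ⟨j + 2, by omega⟩ b
  have hg := word_ins_gt p ⟨j + 2, by omega⟩ b
  generalize (ins (p, ⟨j + 2, by omega⟩, b)) = q at *
  simp only at hs hl hg
  unfold td
  rw [sum_gap (fun i => p.dl (i + 2)) (fun i => q.dl (i + 2)) j r hj]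
  · rw [add_assoc]; congr 1
    simp only [dl_succ]
    have e1 := hl (j + 2) le_rfl
    have e2 := hg (j + 3) (by omega) (by omega)
    have b1 := word_bd p (j + 2)
    have b2 := word_bd p (j + 3)
    simp only [show j + 1 + 2 = j + 3 from rfl, show j + 1 + 1 = j + 2 from rfl,
      show j + 2 + 1 = j + 3 from rfl, show j + 3 + 1 = j + 4 from rfl,
      show j + 1 + 1 + 2 = j + 4 from rfl, show j + 1 + 1 + 1 = j + 3 from rfl] at *
    rw [e1, e2, hs]
    push_cast at *
    cases b <;> simp <;> split_ifs <;> omega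
  · intro i hi
    simp only [dl_succ]
    rw [hl _ (by omega), hl _ (by omega)]
  · intro i hi hi'
    simp only [dl_succ]
    rw [hg (i + 2) (by omega) (by omega), hg (i + 3) (by omega) (by omega)]

lemma td_ins_last {r : ℕ} (p : SignedPerm (r + 2)) (b : Bool) :
    (ins (p, ⟨r + 2, by omega⟩, b)).td (r + 1) = p.td r + b.toNat := by
  have hs := word_ins_self p ⟨r + 2, by omega⟩ b
  have hl := word_ins_lt p ⟨r + 2, by omega⟩ b
  generalize (ins (p, ⟨r + 2, by omega⟩, b)) = q at *
  simp only at hs hl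
  unfold td
  rw [Finset.sum_range_succ]
  congr 1
  · apply Finset.sum_congr rfl
    intro i hi
    have := Finset.mem_range.mp hi
    simp only [dl_succ]
    rw [hl _ (by omega), hl _ (by omega)]
  · rw [dl_succ]
    have b1 := word_bd p (r + 2)
    rw [hs, hl (r + 1 + 1) (by omega)]
    push_cast at *
    simp only [show r + 1 + 1 = r + 2 from rfl] at *
    cases b <;> simp <;> omega

lemma dl01_ins_ge {r : ℕ} (p : SignedPerm (r + 2)) (k : Fin (r + 3)) (hk : 2 ≤ (k : ℕ)) (b : Bool) :
    (ins (p, k, b)).dl 0 = p.dl 0 ∧ (ins (p, k, b)).dl 1 = p.dl 1 := by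
  have hl := word_ins_lt p k b
  rw [dl_zero, dl_zero, dl_succ, dl_succ, hl 1 (by omega), hl 2 hk]
  simp

lemma dl_ins_zero_false {r : ℕ} (p : SignedPerm (r + 2)) :
    (ins (p, 0, false)).dl 0 = 0 ∧ (ins (p, 0, false)).dl 1 = 1 ∧
    (ins (p, 0, false)).td (r + 1) = p.dl 1 + p.td r := by
  have hs := word_ins_self p 0 false
  have hg := word_ins_gt p 0 false
  generalize (ins (p, 0, false)) = q at *
  simp at hs hg
  have b1 := word_bd p 1
  have e1 := hg 1 (by omega) (by omega)
  push_cast at *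
  refine ⟨?_, ?_, ?_⟩
  · rw [dl_zero, hs, e1, if_neg]; omega
  · rw [dl_succ, if_pos]; simp only [Nat.reduceAdd]; rw [hs, e1]; omega
  · unfold td
    rw [Finset.sum_range_succ', add_comm]
    congr 1
    · rw [dl_succ, dl_succ, hg 2 (by omega) (by omega), hg 1 (by omega) (by omega)]
    · apply Finset.sum_congr rfl
      intro i hi
      have := Finset.mem_range.mp hi
      simp only [dl_succ]
      rw [hg (i + 3) (by omega) (by omega), hg (i + 2) (by omega) (by omega)]

lemma dl_ins_zero_true {r : ℕ} (p : SignedPerm (r + 2)) :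
    ¬ ((ins (p, 0, true)).dl 1 = 1) := by
  have hs := word_ins_self p 0 true
  have hg := word_ins_gt p 0 true
  generalize (ins (p, 0, true)) = q at *
  simp at hs hg
  have b1 := word_bd p 1
  have e1 := hg 1 (by omega) (by omega)
  push_cast at *
  rw [dl_succ, if_neg]
  · simp
  · simp only [Nat.reduceAdd]; rw [hs, e1]; omega

lemma dl_ins_one {r : ℕ} (p : SignedPerm (r + 2)) (b : Bool) :
    ¬ ((ins (p, 1, b)).dl 1 = 1 ∧ (ins (p, 1, b)).dl 0 = 0) := by
  have hs := word_ins_self p 1 b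
  have hl := word_ins_lt p 1 b 1 (by simp)
  generalize (ins (p, 1, b)) = q at *
  simp at hs
  have b1 := word_bd p 1
  push_cast at *
  rw [dl_succ, dl_zero]
  simp only [Nat.reduceAdd]
  rw [hl, hs]
  cases b <;> simp <;> omega

open Polynomial in
lemma per_p {r : ℕ} (p : SignedPerm (r + 2)) :
    ∑ y : Fin (r + 3) × Bool,
      (if (ins (p, y)).dl 1 = 1 ∧ (ins (p, y)).dl 0 = 0 then (X : ℚ[X]) ^ (ins (p, y)).d else 0)
    = X * X ^ (p.dl 1 + p.td r) +
      (if p.dl 1 = 1 ∧ p.dl 0 = 0 then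
        X ^ p.d * (2 * (p.d : ℚ[X]) * (1 - X) - 1 + (2 * (r : ℚ[X]) + 3) * X) else 0) := by
  rw [Fintype.sum_prod_type, Fin.sum_univ_succ, Fin.sum_univ_succ]
  simp only [Fintype.sum_bool]
  rw [if_neg (fun h => dl_ins_zero_true p h.1), if_neg (c := (ins (p, Fin.succ 0, true)).dl 1 = 1 ∧ (ins (p, Fin.succ 0, true)).dl 0 = 0) (dl_ins_one p true),
    if_neg (c := (ins (p, Fin.succ 0, false)).dl 1 = 1 ∧ (ins (p, Fin.succ 0, false)).dl 0 = 0) (dl_ins_one p false)]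
  obtain ⟨z0, z1, z2⟩ := dl_ins_zero_false p
  rw [if_pos ⟨z1, z0⟩, d_eq_td, z0, z1, z2]
  have hge : ∀ (k : Fin (r + 1)) b, (ins (p, k.succ.succ, b)).dl 0 = p.dl 0 ∧
      (ins (p, k.succ.succ, b)).dl 1 = p.dl 1 :=
    fun k b => dl01_ins_ge p _ (by simp) b
  simp only [hge, d_eq_td]
  by_cases h : p.dl 1 = 1 ∧ p.dl 0 = 0
  · simp only [h]
    rw [Fin.sum_univ_castSucc]
    have hlast : ∀ b, (ins (p, (Fin.last r).succ.succ, b)).td (r + 1) = p.td r + b.toNat :=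
      fun b => td_ins_last p b
    rw [hlast, hlast]
    have hin : ∀ (k : Fin r) b, (X : ℚ[X]) ^ (0 + 1 + (ins (p, k.castSucc.succ.succ, b)).td (r + 1))
        = X ^ (p.td r + 1) * (X + (p.dl ((k : ℕ) + 2) : ℚ[X]) * (1 - X)) := by
      intro k b
      have h1 : (ins (p, k.castSucc.succ.succ, b)).td (r + 1) + p.dl (k + 2) = p.td r + 1 :=
        td_ins_inner p k k.2 b
      have h2 := dl_le p (k + 2)
      rcases Nat.le_one_iff_eq_zero_or_eq_one.mp h2 with h3 | h3
      · rw [h3] at h1 ⊢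
        rw [show (ins (p, k.castSucc.succ.succ, b)).td (r + 1) = p.td r + 1 from h1]
        push_cast; ring
      · rw [h3] at h1 ⊢
        rw [show (ins (p, k.castSucc.succ.succ, b)).td (r + 1) = p.td r by omega]
        push_cast; ring
    simp only [hin, and_self, if_true]
    have hs : ∑ k : Fin r, (p.dl ((k : ℕ) + 2) : ℚ[X]) = (p.td r : ℚ[X]) := by
      rw [td, Fin.sum_univ_eq_sum_range (fun k => (p.dl (k + 2) : ℚ[X])) r]
      push_cast; rfl
    rw [Finset.sum_add_distrib, ← Finset.mul_sum, Finset.sum_add_distrib, ← Finset.sum_mul, hs]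
    simp
    ring
  · simp only [if_neg h]
    simp
    ring

end SignedPerm

open Polynomial SignedPerm in
/-- **Proposition 3.3 (i).** Difference-differential equation for `D_n^1(t)`. -/
theorem polyD1_recurrence (n : ℕ) (hn : 3 ≤ n) :
    polyD1 n = (C (2 * ((n : ℚ) - 1)) * X - 1) * polyD1 (n - 1)
      + 2 * X * (1 - X) * derivative (polyD1 (n - 1))
      + polyD01 (n - 1) + X * polyDGe2 (n - 1) + polyD0Ge2 (n - 1) := by
  obtain ⟨r, rfl⟩ : ∃ r, n = r + 3 := ⟨n - 3, by omega⟩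
  rw [show r + 3 - 1 = r + 2 from rfl]
  have A : ∀ r, 2 * polyD1 (r + 2) = ∑ p : SignedPerm (r + 2),
      if p.dl 1 = 1 ∧ p.dl 0 = 0 then (X : ℚ[X]) ^ p.d else 0 := by
    intro r
    have := two_mul_sum (m := r + 1) (by omega) (fun A => 1 ∈ A ∧ 0 ∉ A)
    refine Eq.trans this (Finset.sum_congr rfl fun p _ => ?_)
    have := dl_le p 0
    congr 1; simp only [mem_ddes, eq_iff_iff]; omega
  have A01 : 2 * polyD01 (r + 2) = ∑ p : SignedPerm (r + 2),
      if p.dl 0 = 1 ∧ p.dl 1 = 1 then (X : ℚ[X]) ^ p.d else 0 := by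
    have := two_mul_sum (m := r + 1) (by omega) (fun A => 0 ∈ A ∧ 1 ∈ A)
    refine Eq.trans this (Finset.sum_congr rfl fun p _ => ?_)
    congr 1; simp only [mem_ddes, eq_iff_iff]; omega
  have A2 : 2 * polyDGe2 (r + 2) = ∑ p : SignedPerm (r + 2),
      if p.dl 0 = 0 ∧ p.dl 1 = 0 then (X : ℚ[X]) ^ p.d else 0 := by
    have := two_mul_sum (m := r + 1) (by omega) (fun A => 0 ∉ A ∧ 1 ∉ A)
    refine Eq.trans this (Finset.sum_congr rfl fun p _ => ?_)
    have := dl_le p 0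
    have := dl_le p 1
    congr 1; simp only [mem_ddes, eq_iff_iff]; omega
  have A02 : 2 * polyD0Ge2 (r + 2) = ∑ p : SignedPerm (r + 2),
      if p.dl 0 = 1 ∧ p.dl 1 = 0 then (X : ℚ[X]) ^ p.d else 0 := by
    have := two_mul_sum (m := r + 1) (by omega) (fun A => 0 ∈ A ∧ 1 ∉ A)
    refine Eq.trans this (Finset.sum_congr rfl fun p _ => ?_)
    have := dl_le p 1
    congr 1; simp only [mem_ddes, eq_iff_iff]; omega
  have hd : 2 * derivative (polyD1 (r + 2)) = ∑ p : SignedPerm (r + 2),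
      derivative (if p.dl 1 = 1 ∧ p.dl 0 = 0 then (X : ℚ[X]) ^ p.d else 0) := by
    rw [← derivative_sum, ← A]; simp
  have two : (2 : ℚ[X]) ≠ 0 := two_ne_zero
  apply mul_left_cancel₀ two
  have e : 2 * ((C (2 * (((r + 3 : ℕ) : ℚ) - 1)) * X - 1) * polyD1 (r + 2)
      + 2 * X * (1 - X) * derivative (polyD1 (r + 2))
      + polyD01 (r + 2) + X * polyDGe2 (r + 2) + polyD0Ge2 (r + 2))
      = ((2 * (r : ℚ[X]) + 4) * X - 1) * (2 * polyD1 (r + 2))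
      + 2 * X * (1 - X) * (2 * derivative (polyD1 (r + 2)))
      + 2 * polyD01 (r + 2) + X * (2 * polyDGe2 (r + 2)) + 2 * polyD0Ge2 (r + 2) := by
    have : (C (2 * (((r + 3 : ℕ) : ℚ) - 1)) : ℚ[X]) = 2 * (r : ℚ[X]) + 4 := by
      rw [show (2 * (((r + 3 : ℕ) : ℚ) - 1)) = 2 * (r : ℚ) + 4 by push_cast; ring]
      rw [C_add, C_mul, C_ofNat, C_ofNat]; simp
    rw [this]; ring
  rw [e, A (r + 1), A01, A2, A02, hd, A r]
  rw [← (Equiv.ofBijective _ (ins_bijective (m := r + 2))).sum_comp]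
  simp only [Equiv.ofBijective_apply]
  rw [Fintype.sum_prod_type]
  simp only [per_p]
  rw [Finset.mul_sum, Finset.mul_sum, Finset.mul_sum, ← Finset.sum_add_distrib,
    ← Finset.sum_add_distrib, ← Finset.sum_add_distrib, ← Finset.sum_add_distrib]
  apply Finset.sum_congr rfl
  intro p _
  have h0 := dl_le p 0
  have h1 := dl_le p 1
  have hder : ∀ k : ℕ, X * derivative ((X : ℚ[X]) ^ k) = (k : ℚ[X]) * X ^ k := by
    intro k
    cases k with
    | zero => simp
    | succ k => simp [derivative_X_pow]; ring
  have hD := d_eq_td p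
  rcases Nat.le_one_iff_eq_zero_or_eq_one.mp h0 with h0 | h0 <;>
  rcases Nat.le_one_iff_eq_zero_or_eq_one.mp h1 with h1 | h1 <;>
  rw [h0, h1] at hD <;> simp only [h0, h1] <;> simp only [and_self, and_true, and_false,
    if_true, if_false, zero_ne_one, one_ne_zero, derivative_zero, mul_zero, add_zero, zero_add]
  · rw [hD]; ring
  · have := hder p.d
    rw [show 2 * X * (1 - X) * derivative ((X : ℚ[X]) ^ p.d)
      = 2 * (1 - X) * (X * derivative ((X : ℚ[X]) ^ p.d)) by ring, this,
      show 1 + p.td r = p.d by omega]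
    ring
  · rw [hD]; ring
  · rw [hD]; ring
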